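/- arXiv:1512.01907 — 2 statements merged into one kernel-verified Lean document; each statement's English description precedes it below -/
import Mathlib

section
/- (Lemma 2.2, variance) Assume P([0,1]) = 1. Then the variance V = ∫ (x − E(X))² dP(x) of a random variable X with distribution P satisfies V = −p₂(r₂ − 1)²((p₁r₁ − 1)² + p₂(p₁r₁² − 1)) / ((p₁r₁ + p₂r₂ − 1)²(p₁r₁² + p₂r₂² − 1)). -/
open MeasureTheory

/-!
Integrating the self-similarity relation against a continuous function `f` gives
`∫ f dP = p₁ ∫ f ∘ S₁ dP + p₂ ∫ f ∘ S₂ dP` (`integral_selfSimilar`); all integrals exist because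
`P` is carried by the compact set `[0, 1]`. For `f = x` and `f = x²` these are linear equations
for the first two moments `m` and `q`, uniquely solvable because `p₁ r₁ + p₂ r₂` and
`p₁ r₁² + p₂ r₂²` are less than `1`. The formula is then `V = q - m²`.
-/

lemma integrable_of_continuous_of_Icc {P : Measure ℝ} [IsProbabilityMeasure P]
    (hsupp : P (Set.Icc (0 : ℝ) 1) = 1) {f : ℝ → ℝ} (hf : Continuous f) : Integrable f P := by
  have hae : ∀ᵐ x ∂P, x ∈ Set.Icc (0 : ℝ) 1 :=
    (prob_compl_eq_zero_iff measurableSet_Icc).2 hsupp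
  rw [← Measure.restrict_eq_self_of_ae_mem hae]
  exact hf.continuousOn.integrableOn_compact isCompact_Icc

lemma integral_selfSimilar {p₁ p₂ : ℝ} (hp₁ : 0 < p₁) (hp₂ : 0 < p₂) {S₁ S₂ : ℝ → ℝ}
    (hS₁ : Continuous S₁) (hS₂ : Continuous S₂) {P : Measure ℝ} [IsProbabilityMeasure P]
    (hP : P = ENNReal.ofReal p₁ • P.map S₁ + ENNReal.ofReal p₂ • P.map S₂)
    (hsupp : P (Set.Icc (0 : ℝ) 1) = 1) {f : ℝ → ℝ} (hf : Continuous f) :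
    ∫ x, f x ∂P = p₁ * ∫ x, f (S₁ x) ∂P + p₂ * ∫ x, f (S₂ x) ∂P := by
  have map_integrable {S : ℝ → ℝ} (hS : Continuous S) : Integrable f (P.map S) :=
    (integrable_map_measure hf.aestronglyMeasurable hS.aemeasurable).2
      (integrable_of_continuous_of_Icc hsupp (hf.comp hS))
  calc ∫ x, f x ∂P
      = ∫ x, f x ∂(ENNReal.ofReal p₁ • P.map S₁ + ENNReal.ofReal p₂ • P.map S₂) := by rw [← hP]
    _ = p₁ * ∫ x, f (S₁ x) ∂P + p₂ * ∫ x, f (S₂ x) ∂P := by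
      rw [integral_add_measure ((map_integrable hS₁).smul_measure ENNReal.ofReal_ne_top)
          ((map_integrable hS₂).smul_measure ENNReal.ofReal_ne_top),
        integral_smul_measure, integral_smul_measure,
        integral_map hS₁.aemeasurable hf.aestronglyMeasurable,
        integral_map hS₂.aemeasurable hf.aestronglyMeasurable,
        ENNReal.toReal_ofReal hp₁.le, ENNReal.toReal_ofReal hp₂.le, smul_eq_mul, smul_eq_mul]

lemma integral_quadratic {P : Measure ℝ} [IsProbabilityMeasure P]
    (hsupp : P (Set.Icc (0 : ℝ) 1) = 1) (a b c : ℝ) :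
    ∫ x, (a * x ^ 2 + b * x + c) ∂P = a * ∫ x, x ^ 2 ∂P + b * ∫ x, x ∂P + c := by
  have h₂ : Integrable (fun x : ℝ => a * x ^ 2) P :=
    integrable_of_continuous_of_Icc hsupp (by fun_prop)
  have h₁ : Integrable (fun x : ℝ => b * x) P :=
    integrable_of_continuous_of_Icc hsupp (by fun_prop)
  have h₁₂ : Integrable (fun x : ℝ => a * x ^ 2 + b * x) P := h₂.add h₁
  rw [integral_add h₁₂ (integrable_const c), integral_add h₂ h₁, integral_const_mul,
    integral_const_mul]
  simp

theorem stmt_4 (r₁ r₂ p₁ p₂ : ℝ) (hr₁ : 0 < r₁) (hr₂ : 0 < r₂) (hr : r₁ + r₂ < 1)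
    (hp₁ : 0 < p₁) (hp₂ : 0 < p₂) (hp : p₁ + p₂ = 1)
    (S₁ S₂ : ℝ → ℝ)
    (hS₁ : S₁ = fun x => r₁ * x)
    (hS₂ : S₂ = fun x => r₂ * x + (1 - r₂))
    (P : Measure ℝ) [IsProbabilityMeasure P]
    (hP : P = ENNReal.ofReal p₁ • P.map S₁ + ENNReal.ofReal p₂ • P.map S₂)
    (hsupp : P (Set.Icc (0 : ℝ) 1) = 1) :
    ∫ x, (x - ∫ y, y ∂P) ^ 2 ∂P =
      -(p₂ * (r₂ - 1) ^ 2 * ((p₁ * r₁ - 1) ^ 2 + p₂ * (p₁ * r₁ ^ 2 - 1))) /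
        ((p₁ * r₁ + p₂ * r₂ - 1) ^ 2 * (p₁ * r₁ ^ 2 + p₂ * r₂ ^ 2 - 1)) := by
  have hc₁ : Continuous S₁ := by rw [hS₁]; fun_prop
  have hc₂ : Continuous S₂ := by rw [hS₂]; fun_prop
  have hm := integral_selfSimilar hp₁ hp₂ hc₁ hc₂ hP hsupp (f := fun x => x) (by fun_prop)
  have hq := integral_selfSimilar hp₁ hp₂ hc₁ hc₂ hP hsupp (f := fun x => x ^ 2) (by fun_prop)
  have hquad := integral_quadratic hsupp
  simp only [hS₁, hS₂] at hm hq
  clear hP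
  set m := ∫ x, x ∂P
  set q := ∫ x, x ^ 2 ∂P
  have e₁ : ∫ x, r₁ * x ∂P = r₁ * m := integral_const_mul _ _
  have e₂ : ∫ x, (r₂ * x + (1 - r₂)) ∂P = r₂ * m + (1 - r₂) := by
    simpa using hquad 0 r₂ (1 - r₂)
  have e₃ : ∫ x, (r₁ * x) ^ 2 ∂P = r₁ ^ 2 * q := by
    simp only [mul_pow]; exact integral_const_mul _ _
  have e₄ : ∫ x, (r₂ * x + (1 - r₂)) ^ 2 ∂P
      = r₂ ^ 2 * q + 2 * r₂ * (1 - r₂) * m + (1 - r₂) ^ 2 := by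
    rw [← hquad]; congr 1; ext x; ring
  have e₅ : ∫ x, (x - m) ^ 2 ∂P = q - m ^ 2 := by
    have h := hquad 1 (-2 * m) (m ^ 2)
    calc _ = ∫ x, (1 * x ^ 2 + -2 * m * x + m ^ 2) ∂P := by congr 1; ext x; ring
      _ = q - m ^ 2 := by rw [h]; ring
  rw [e₁, e₂] at hm
  rw [e₃, e₄] at hq
  rw [e₅]
  have hA : p₁ * r₁ + p₂ * r₂ - 1 < 0 := by nlinarith
  have hB : p₁ * r₁ ^ 2 + p₂ * r₂ ^ 2 - 1 < 0 := by
    have h₁ : r₁ ^ 2 < 1 := by nlinarith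
    have h₂ : r₂ ^ 2 < 1 := by nlinarith
    nlinarith
  have hm' : m = -(p₂ * (1 - r₂)) / (p₁ * r₁ + p₂ * r₂ - 1) := by
    rw [eq_div_iff hA.ne]; linarith
  have hq' : q = -(p₂ * (2 * r₂ * (1 - r₂) * m + (1 - r₂) ^ 2)) /
      (p₁ * r₁ ^ 2 + p₂ * r₂ ^ 2 - 1) := by
    rw [eq_div_iff hB.ne]; linarith
  have hA' := hA.ne
  have hB' := hB.ne
  rw [hq', hm']
  field_simp
  ring
end

section
/- (Example 4.1, four means) Let P be the classical Cantor distribution: r₁ = r₂ = 1/3, p₁ = p₂ = 1/2, P = (1/2)·(P∘S₁⁻¹) + (1/2)·(P∘S₂⁻¹), and assume P([0,1]) = 1. Then the set α = {1/18, 5/18, 13/18, 17/18} together with the cells J₁₁ = [0, 1/9], J₁₂ = [2/9, 1/3], J₂₁ = [2/3, 7/9], J₂₂ = [8/9, 1] forms a centroidal Voronoi tessellation with four means: (i) P(J₁₁ ∪ J₁₂ ∪ J₂₁ ∪ J₂₂) = 1; (ii) the centroid of J₁₁ is 1/18, the centroid of J₁₂ is 5/18, the centroid of J₂₁ is 13/18,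 and the centroid of J₂₂ is 17/18, where the centroid of a cell A is (1/P(A)) ∫_A x dP(x); and (iii) every point of each cell attains its minimum distance to α at the corresponding generator, i.e., each cell is contained in the Voronoi region of its generator. -/
/-!
Self-similarity of `P` transports mass and first moment between scales. On a cell lying
strictly to the left of `2/3` only the first branch `x ↦ x / 3` contributes, because the second one pushes
`P` into `[2/3, 1]`; symmetrically to the right of `1/3` (`restrict_left`, `restrict_right`). Hence a cell
`[a, b]` carries half the mass of its preimage under the corresponding branch, and its first moment
is an affine expression in the mass and first moment of that preimage (`cell_left`, `cell_right`).
Descending two levels from `[0, 1]`, whose mass is `1` and whose first moment is `1/2`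
(`integral_id_eq_half`, the fixed point of `m = m / 6 + (m / 3 + 2 / 3) / 2`), gives mass `1/4`
for each of the four cells together with their centroids. The Voronoi condition is elementary.
-/

open MeasureTheory

section Cantor

variable {P : Measure ℝ}

lemma restrict_Icc_eq
    (hP : P = (2⁻¹ : ENNReal) • P.map (fun x : ℝ => x / 3) +
              (2⁻¹ : ENNReal) • P.map (fun x : ℝ => x / 3 + 2 / 3)) (a b : ℝ) :
    P.restrict (Set.Icc a b) =
      (2⁻¹ : ENNReal) • (P.restrict (Set.Icc (3 * a) (3 * b))).map (fun x : ℝ => x / 3) +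
      (2⁻¹ : ENNReal) • (P.restrict (Set.Icc (3 * a - 2) (3 * b - 2))).map
        (fun x : ℝ => x / 3 + 2 / 3) := by
  have h1 : (fun x : ℝ => x / 3) ⁻¹' Set.Icc a b = Set.Icc (3 * a) (3 * b) := by
    ext x
    simp only [Set.mem_preimage, Set.mem_Icc]
    constructor <;> rintro ⟨h, h'⟩ <;> constructor <;> linarith
  have h2 : (fun x : ℝ => x / 3 + 2 / 3) ⁻¹' Set.Icc a b =
      Set.Icc (3 * a - 2) (3 * b - 2) := by
    ext x
    simp only [Set.mem_preimage, Set.mem_Icc]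
    constructor <;> rintro ⟨h, h'⟩ <;> constructor <;> linarith
  conv_lhs => rw [hP]
  rw [Measure.restrict_add, Measure.restrict_smul, Measure.restrict_smul,
    Measure.restrict_map (by fun_prop) measurableSet_Icc,
    Measure.restrict_map (by fun_prop) measurableSet_Icc, h1, h2]

variable [IsProbabilityMeasure P]

lemma restrict_unit (hsupp : P (Set.Icc (0 : ℝ) 1) = 1) : P.restrict (Set.Icc (0 : ℝ) 1) = P :=
  Measure.restrict_eq_self_of_ae_mem ((mem_ae_iff_prob_eq_one measurableSet_Icc).2 hsupp)

lemma measure_Icc_eq_zero_of_neg (hsupp : P (Set.Icc (0 : ℝ) 1) = 1) {a b : ℝ} (hb : b < 0) :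
    P (Set.Icc a b) = 0 := by
  have h : P (Set.Icc (0 : ℝ) 1)ᶜ = 0 := (prob_compl_eq_zero_iff measurableSet_Icc).2 hsupp
  refine measure_mono_null ?_ h
  intro x hx hx'
  linarith [hx.2, hx'.1]

lemma measure_Icc_eq_zero_of_one_lt (hsupp : P (Set.Icc (0 : ℝ) 1) = 1) {a b : ℝ} (ha : 1 < a) :
    P (Set.Icc a b) = 0 := by
  have h : P (Set.Icc (0 : ℝ) 1)ᶜ = 0 := (prob_compl_eq_zero_iff measurableSet_Icc).2 hsupp
  refine measure_mono_null ?_ h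
  intro x hx hx'
  linarith [hx.1, hx'.2]

lemma restrict_left
    (hP : P = (2⁻¹ : ENNReal) • P.map (fun x : ℝ => x / 3) +
              (2⁻¹ : ENNReal) • P.map (fun x : ℝ => x / 3 + 2 / 3))
    (hsupp : P (Set.Icc (0 : ℝ) 1) = 1) {a b : ℝ} (hb : b < 2 / 3) :
    P.restrict (Set.Icc a b) =
      (2⁻¹ : ENNReal) • (P.restrict (Set.Icc (3 * a) (3 * b))).map (fun x : ℝ => x / 3) := by
  rw [restrict_Icc_eq hP,
    Measure.restrict_zero_set (measure_Icc_eq_zero_of_neg (b := 3 * b - 2) hsupp (by linarith))]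
  simp

lemma restrict_right
    (hP : P = (2⁻¹ : ENNReal) • P.map (fun x : ℝ => x / 3) +
              (2⁻¹ : ENNReal) • P.map (fun x : ℝ => x / 3 + 2 / 3))
    (hsupp : P (Set.Icc (0 : ℝ) 1) = 1) {a b : ℝ} (ha : 1 / 3 < a) :
    P.restrict (Set.Icc a b) =
      (2⁻¹ : ENNReal) • (P.restrict (Set.Icc (3 * a - 2) (3 * b - 2))).map
        (fun x : ℝ => x / 3 + 2 / 3) := by
  rw [restrict_Icc_eq hP,
    Measure.restrict_zero_set (measure_Icc_eq_zero_of_one_lt (a := 3 * a) hsupp (by linarith))]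
  simp

/-- The interval `[a, b]` has `P`-mass `m` and first moment `∫_{[a,b]} x dP = c`. -/
def HasMoments (P : Measure ℝ) (a b m c : ℝ) : Prop :=
  P.real (Set.Icc a b) = m ∧ ∫ x in Set.Icc a b, x ∂P = c

lemma cell_left
    (hP : P = (2⁻¹ : ENNReal) • P.map (fun x : ℝ => x / 3) +
              (2⁻¹ : ENNReal) • P.map (fun x : ℝ => x / 3 + 2 / 3))
    (hsupp : P (Set.Icc (0 : ℝ) 1) = 1) {a b m c : ℝ} (hb : b < 2 / 3)
    (h : HasMoments P (3 * a) (3 * b) m c) : HasMoments P a b (m / 2) (c / 6) := by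
  have hr := restrict_left (a := a) hP hsupp hb
  constructor
  · have := congrArg (fun μ : Measure ℝ => μ.real Set.univ) hr
    simp only [measureReal_restrict_apply_univ, measureReal_ennreal_smul_apply,
      map_measureReal_apply (show Measurable (fun x : ℝ => x / 3) by fun_prop) MeasurableSet.univ,
      Set.preimage_univ, h.1] at this
    rw [this]
    simp
    ring
  · rw [hr, integral_smul_measure, integral_map (by fun_prop) (by fun_prop),
      integral_div, h.2]
    simp
    ring

lemma cell_right
    (hP : P = (2⁻¹ : ENNReal) • P.map (fun x : ℝ => x / 3) +
              (2⁻¹ : ENNReal) • P.map (fun x : ℝ => x / 3 + 2 / 3))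
    (hsupp : P (Set.Icc (0 : ℝ) 1) = 1) {a b m c : ℝ} (ha : 1 / 3 < a)
    (h : HasMoments P (3 * a - 2) (3 * b - 2) m c) :
    HasMoments P a b (m / 2) (c / 6 + m / 3) := by
  have hr := restrict_right (b := b) hP hsupp ha
  constructor
  · have := congrArg (fun μ : Measure ℝ => μ.real Set.univ) hr
    simp only [measureReal_restrict_apply_univ, measureReal_ennreal_smul_apply,
      map_measureReal_apply (show Measurable (fun x : ℝ => x / 3 + 2 / 3) by fun_prop)
        MeasurableSet.univ, Set.preimage_univ, h.1] at this
    rw [this]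
    simp
    ring
  · have hi : Integrable (fun x : ℝ => x / 3) (P.restrict (Set.Icc (3 * a - 2) (3 * b - 2))) :=
      Continuous.integrableOn_Icc (by fun_prop)
    rw [hr, integral_smul_measure, integral_map (by fun_prop) (by fun_prop),
      integral_add hi (integrable_const _), integral_div, h.2, integral_const,
      measureReal_restrict_apply_univ, h.1]
    simp
    ring

lemma integral_id_eq_half
    (hP : P = (2⁻¹ : ENNReal) • P.map (fun x : ℝ => x / 3) +
              (2⁻¹ : ENNReal) • P.map (fun x : ℝ => x / 3 + 2 / 3))
    (hsupp : P (Set.Icc (0 : ℝ) 1) = 1) : ∫ x, x ∂P = 1 / 2 := by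
  have hint : ∀ f : ℝ → ℝ, Continuous f → Integrable f P := fun f hf => by
    rw [← restrict_unit hsupp]
    exact hf.integrableOn_Icc
  have hm : ∫ x, x ∂P = 2⁻¹ * ((∫ x, x ∂P) / 3) + 2⁻¹ * ((∫ x, x ∂P) / 3 + 2 / 3) := by
    conv_lhs => rw [hP]
    rw [integral_add_measure, integral_smul_measure, integral_smul_measure,
      integral_map (by fun_prop) (by fun_prop), integral_map (by fun_prop) (by fun_prop),
      integral_add (hint _ (by fun_prop)) (integrable_const _), integral_div, integral_const]
    · simp
    · refine Integrable.smul_measure ?_ (by simp)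
      rw [integrable_map_measure (by fun_prop) (by fun_prop)]
      exact hint _ (by fun_prop)
    · refine Integrable.smul_measure ?_ (by simp)
      rw [integrable_map_measure (by fun_prop) (by fun_prop)]
      exact hint _ (by fun_prop)
  linarith

lemma hasMoments_unit
    (hP : P = (2⁻¹ : ENNReal) • P.map (fun x : ℝ => x / 3) +
              (2⁻¹ : ENNReal) • P.map (fun x : ℝ => x / 3 + 2 / 3))
    (hsupp : P (Set.Icc (0 : ℝ) 1) = 1) : HasMoments P 0 1 1 (1 / 2) := by
  refine ⟨by simp [Measure.real, hsupp], ?_⟩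
  rw [restrict_unit hsupp]
  exact integral_id_eq_half hP hsupp

end Cantor

lemma isLeast_abs_sub {x g : ℝ} {s : Set ℝ} (hg : g ∈ s) (h : ∀ b ∈ s, |x - g| ≤ |x - b|) :
    IsLeast ((fun b => |x - b|) '' s) |x - g| := by
  refine ⟨⟨g, hg, rfl⟩, ?_⟩
  rintro _ ⟨b, hb, rfl⟩
  exact h b hb

theorem stmt_18 (P : Measure ℝ) [IsProbabilityMeasure P]
    (hP : P = (2⁻¹ : ENNReal) • P.map (fun x : ℝ => x / 3) +
              (2⁻¹ : ENNReal) • P.map (fun x : ℝ => x / 3 + 2 / 3))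
    (hsupp : P (Set.Icc (0 : ℝ) 1) = 1) :
    P (Set.Icc (0 : ℝ) (1 / 9) ∪ Set.Icc (2 / 9) (1 / 3) ∪
        Set.Icc (2 / 3) (7 / 9) ∪ Set.Icc (8 / 9) 1) = 1 ∧
    (P (Set.Icc (0 : ℝ) (1 / 9))).toReal⁻¹ *
        (∫ x in Set.Icc (0 : ℝ) (1 / 9), x ∂P) = 1 / 18 ∧
    (P (Set.Icc (2 / 9 : ℝ) (1 / 3))).toReal⁻¹ *
        (∫ x in Set.Icc (2 / 9 : ℝ) (1 / 3), x ∂P) = 5 / 18 ∧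
    (P (Set.Icc (2 / 3 : ℝ) (7 / 9))).toReal⁻¹ *
        (∫ x in Set.Icc (2 / 3 : ℝ) (7 / 9), x ∂P) = 13 / 18 ∧
    (P (Set.Icc (8 / 9 : ℝ) 1)).toReal⁻¹ *
        (∫ x in Set.Icc (8 / 9 : ℝ) 1, x ∂P) = 17 / 18 ∧
    (∀ x ∈ Set.Icc (0 : ℝ) (1 / 9),
      IsLeast ((fun b => |x - b|) ''
        ({1 / 18, 5 / 18, 13 / 18, 17 / 18} : Set ℝ)) |x - 1 / 18|) ∧
    (∀ x ∈ Set.Icc (2 / 9 : ℝ) (1 / 3),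
      IsLeast ((fun b => |x - b|) ''
        ({1 / 18, 5 / 18, 13 / 18, 17 / 18} : Set ℝ)) |x - 5 / 18|) ∧
    (∀ x ∈ Set.Icc (2 / 3 : ℝ) (7 / 9),
      IsLeast ((fun b => |x - b|) ''
        ({1 / 18, 5 / 18, 13 / 18, 17 / 18} : Set ℝ)) |x - 13 / 18|) ∧
    (∀ x ∈ Set.Icc (8 / 9 : ℝ) 1,
      IsLeast ((fun b => |x - b|) ''
        ({1 / 18, 5 / 18, 13 / 18, 17 / 18} : Set ℝ)) |x - 17 / 18|) := by
  have h0 := hasMoments_unit hP hsupp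
  have hL : HasMoments P 0 (1 / 3) (1 / 2) (1 / 12) := by
    convert cell_left (a := 0) (b := 1 / 3) (m := 1) (c := 1 / 2) hP hsupp (by norm_num)
      (by norm_num; exact h0) using 1
    norm_num
  have hR : HasMoments P (2 / 3) 1 (1 / 2) (5 / 12) := by
    convert cell_right (a := 2 / 3) (b := 1) (m := 1) (c := 1 / 2) hP hsupp (by norm_num)
      (by norm_num; exact h0) using 1
    norm_num
  have hLL : HasMoments P 0 (1 / 9) (1 / 4) (1 / 72) := by
    convert cell_left (a := 0) (b := 1 / 9) hP hsupp (by norm_num)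
      (by norm_num; exact hL) using 1 <;> norm_num
  have hLR : HasMoments P (2 / 9) (1 / 3) (1 / 4) (5 / 72) := by
    convert cell_left (a := 2 / 9) (b := 1 / 3) hP hsupp (by norm_num)
      (by norm_num; exact hR) using 1 <;> norm_num
  have hRL : HasMoments P (2 / 3) (7 / 9) (1 / 4) (13 / 72) := by
    convert cell_right (a := 2 / 3) (b := 7 / 9) hP hsupp (by norm_num)
      (by norm_num; exact hL) using 1 <;> norm_num
  have hRR : HasMoments P (8 / 9) 1 (1 / 4) (17 / 72) := by
    convert cell_right (a := 8 / 9) (b := 1) hP hsupp (by norm_num)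
      (by norm_num; exact hR) using 1 <;> norm_num
  refine ⟨?_, ?_, ?_, ?_, ?_, ?_, ?_, ?_, ?_⟩
  · have hu : P.real (Set.Icc (0 : ℝ) (1 / 9) ∪ Set.Icc (2 / 9) (1 / 3) ∪
        Set.Icc (2 / 3) (7 / 9) ∪ Set.Icc (8 / 9) 1) = 1 := by
      rw [measureReal_union _ measurableSet_Icc, measureReal_union _ measurableSet_Icc,
        measureReal_union _ measurableSet_Icc, hLL.1, hLR.1, hRL.1, hRR.1]
      · norm_num
      all_goals
        rw [Set.disjoint_left]
        simp only [Set.mem_union, Set.mem_Icc]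
        intro x hx hx'
        grind
    rwa [Measure.real, ENNReal.toReal_eq_one_iff] at hu
  · rw [← Measure.real, hLL.1, hLL.2]; norm_num
  · rw [← Measure.real, hLR.1, hLR.2]; norm_num
  · rw [← Measure.real, hRL.1, hRL.2]; norm_num
  · rw [← Measure.real, hRR.1, hRR.2]; norm_num
  · intro x hx
    refine isLeast_abs_sub (by simp) ?_
    rintro b (rfl | rfl | rfl | rfl) <;> rw [← sq_le_sq] <;> nlinarith [hx.1, hx.2]
  · intro x hx
    refine isLeast_abs_sub (by simp) ?_
    rintro b (rfl | rfl | rfl | rfl) <;> rw [← sq_le_sq] <;> nlinarith [hx.1, hx.2]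
  · intro x hx
    refine isLeast_abs_sub (by simp) ?_
    rintro b (rfl | rfl | rfl | rfl) <;> rw [← sq_le_sq] <;> nlinarith [hx.1, hx.2]
  · intro x hx
    refine isLeast_abs_sub (by simp) ?_
    rintro b (rfl | rfl | rfl | rfl) <;> rw [← sq_le_sq] <;> nlinarith [hx.1, hx.2]
end
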